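/- arXiv:2207.04620 — 7 statements merged into one kernel-verified Lean document; each statement's English description precedes it below -/
import Mathlib

section
/- For every integer d ≥ 1 and every real x, the derivative of g_d at x equals p_d·(1 − x²)^d, i.e., g_d'(x) = p_d·(1 − x²)^d. -/
noncomputable def g (d : ℕ) : ℝ → ℝ :=
  fun m => ∑ i ∈ Finset.range (d + 1),
    (1 / 4 ^ i : ℝ) * (Nat.choose (2 * i) i) * (m * (1 - m ^ 2) ^ i)

noncomputable def p (d : ℕ) : ℝ :=
  ∑ i ∈ Finset.range (d + 1), (1 / 4 ^ i : ℝ) * (Nat.choose (2 * i) i)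

/-!
Put `cᵢ = C(2i, i) / 4ⁱ` and `u = 1 - m²`. Because `m² = 1 - u`, the derivative of `m uⁱ` is
`(2i + 1) uⁱ - 2i uⁱ⁻¹`, and the recurrence `2(i + 1) cᵢ₊₁ = (2i + 1) cᵢ` makes the sum of these
derivatives weighted by `cᵢ` telescope to `(2d + 1) c_d u^d`. The same telescoping at `u = 1`
evaluates the sum of the `cᵢ` as `(2d + 1) c_d`.
-/

section NormalizedCentralBinom

/-- The central binomial coefficient `C(2n, n)` divided by `4ⁿ`, in a field `K`: the coefficient
of `tⁿ` in `(1 - t)^(-1/2)`, and the weight of the `n`-th term in `g` and `p`. When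
`2 = 0` in `K`, division by zero makes it `0` for `n ≥ 1`. -/
def normalizedCentralBinom (K : Type*) [Field K] (n : ℕ) : K :=
  1 / 4 ^ n * Nat.choose (2 * n) n

variable {K : Type*} [Field K]

theorem two_mul_succ_mul_normalizedCentralBinom_succ [NeZero (2 : K)] (n : ℕ) :
    2 * ((n : K) + 1) * normalizedCentralBinom K (n + 1) =
      (2 * n + 1) * normalizedCentralBinom K n := by
  have four_ne : (4 : K) ≠ 0 := by
    rw [show (4 : K) = 2 * 2 by norm_num]
    exact mul_ne_zero two_ne_zero two_ne_zero
  have choose_succ : ((n : K) + 1) * Nat.choose (2 * (n + 1)) (n + 1) =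
      2 * (2 * n + 1) * Nat.choose (2 * n) n := by
    exact_mod_cast congrArg (Nat.cast (R := K)) (Nat.succ_mul_centralBinom_succ n)
  unfold normalizedCentralBinom
  rw [pow_succ]
  field_simp
  linear_combination 2 * choose_succ

theorem sum_range_succ_normalizedCentralBinom_mul_sub [NeZero (2 : K)] (d : ℕ) (u : K) :
    ∑ i ∈ Finset.range (d + 1),
        normalizedCentralBinom K i * ((2 * i + 1) * u ^ i - 2 * i * u ^ (i - 1)) =
      (2 * d + 1) * normalizedCentralBinom K d * u ^ d := by
  induction d with
  | zero => simp
  | succ d ih =>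
    rw [Finset.sum_range_succ, ih, Nat.add_sub_cancel]
    push_cast
    linear_combination -u ^ d * two_mul_succ_mul_normalizedCentralBinom_succ (K := K) d

theorem sum_range_succ_normalizedCentralBinom [NeZero (2 : K)] (d : ℕ) :
    ∑ i ∈ Finset.range (d + 1), normalizedCentralBinom K i =
      (2 * d + 1) * normalizedCentralBinom K d := by
  simpa using sum_range_succ_normalizedCentralBinom_mul_sub d (1 : K)

end NormalizedCentralBinom

section Derivative

variable {𝕜 : Type*} [NontriviallyNormedField 𝕜]

theorem hasDerivAt_mul_one_sub_sq_pow (n : ℕ) (x : 𝕜) :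
    HasDerivAt (fun m => m * (1 - m ^ 2) ^ n)
      ((2 * n + 1) * (1 - x ^ 2) ^ n - 2 * n * (1 - x ^ 2) ^ (n - 1)) x := by
  have deriv_pow : HasDerivAt (fun m : 𝕜 => (1 - m ^ 2) ^ n)
      (n * (1 - x ^ 2) ^ (n - 1) * -(2 * x)) x := by
    simpa using ((hasDerivAt_pow 2 x).const_sub 1).fun_pow n
  refine ((hasDerivAt_id' x).fun_mul deriv_pow).congr_deriv ?_
  cases n with
  | zero => simp
  | succ n =>
    rw [Nat.add_sub_cancel]
    ring

theorem stmt_1_general [NeZero (2 : 𝕜)] (d : ℕ) (x : 𝕜) :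
    HasDerivAt
      (fun m => ∑ i ∈ Finset.range (d + 1),
        normalizedCentralBinom 𝕜 i * (m * (1 - m ^ 2) ^ i))
      ((∑ i ∈ Finset.range (d + 1), normalizedCentralBinom 𝕜 i) * (1 - x ^ 2) ^ d) x := by
  rw [sum_range_succ_normalizedCentralBinom, ← sum_range_succ_normalizedCentralBinom_mul_sub]
  exact HasDerivAt.fun_sum fun i _ => (hasDerivAt_mul_one_sub_sq_pow i x).const_mul _

end Derivative

theorem stmt_1 (d : ℕ) (hd : 1 ≤ d) (x : ℝ) :
    HasDerivAt (g d) (p d * (1 - x ^ 2) ^ d) x := by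
  exact stmt_1_general d x
end

section
/- For every integer d ≥ 1 and every real x, g_d(x) = p_d·∫_0^x (1 − t²)^d dt. -/
/-!
Integrating the derivative of `t (1 - t²)ⁿ⁺¹` gives, for `Iₙ = ∫ (1 - t²)ⁿ` over `[0, x]`,
`(2n + 3) Iₙ₊₁ = x (1 - x²)ⁿ⁺¹ + 2 (n + 1) Iₙ`. The weights `cₙ = C(2n, n) / 4ⁿ` satisfy
`2 (n + 1) cₙ₊₁ = (2n + 1) cₙ`, so after multiplication by `cₙ₊₁` the recursion telescopes and
`∑ i ≤ d, cᵢ x (1 - x²)ⁱ = (2d + 1) c_d I_d`. The same relation between the weights gives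
`∑ i ≤ d, cᵢ = (2d + 1) c_d`.
-/

open Finset

section CentralBinomProb

variable (K : Type*) [Field K]

/-- The normalized central binomial coefficient `C(2n, n) / 4ⁿ`, that is, the probability of exactly
`n` heads in `2n` fair coin tosses, as an element of the field `K`. -/
def centralBinomProb (n : ℕ) : K := n.centralBinom / 4 ^ n

theorem centralBinomProb_zero : centralBinomProb K 0 = 1 := by
  simp [centralBinomProb]

variable [NeZero (2 : K)]

theorem two_mul_succ_mul_centralBinomProb_succ (n : ℕ) :
    2 * (n + 1) * centralBinomProb K (n + 1) = (2 * n + 1) * centralBinomProb K n := by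
  have four_ne_zero : (4 : K) ≠ 0 := by
    simpa [show (4 : K) = 2 * 2 by norm_num] using two_ne_zero (α := K)
  have recurrence : (n + 1 : K) * (n + 1).centralBinom = 2 * (2 * n + 1) * n.centralBinom :=
    mod_cast congrArg (Nat.cast (R := K)) n.succ_mul_centralBinom_succ
  simp only [centralBinomProb, pow_succ]
  field_simp
  linear_combination 2 * recurrence

theorem sum_range_succ_centralBinomProb (n : ℕ) :
    ∑ i ∈ range (n + 1), centralBinomProb K i = (2 * n + 1) * centralBinomProb K n := by
  induction n with
  | zero => simp
  | succ n ih =>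
    rw [sum_range_succ, ih, ← two_mul_succ_mul_centralBinomProb_succ]
    push_cast
    ring

end CentralBinomProb

theorem hasDerivAt_mul_sub_sq_pow_succ {𝕜 : Type*} [NontriviallyNormedField 𝕜]
    (c t : 𝕜) (n : ℕ) :
    HasDerivAt (fun t => t * (c - t ^ 2) ^ (n + 1))
      ((2 * n + 3) * (c - t ^ 2) ^ (n + 1) - 2 * (n + 1) * c * (c - t ^ 2) ^ n) t := by
  have hasDerivAt_sub_sq_pow : HasDerivAt (fun t => (c - t ^ 2) ^ (n + 1))
      ((n + 1) * (c - t ^ 2) ^ n * -(2 * t)) t := by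
    simpa using ((hasDerivAt_pow 2 t).const_sub c).fun_pow (n + 1)
  refine ((hasDerivAt_id' t).fun_mul hasDerivAt_sub_sq_pow).congr_deriv ?_
  ring

theorem integral_sub_sq_pow_succ (a b c : ℝ) (n : ℕ) :
    (2 * n + 3) * ∫ t in a..b, (c - t ^ 2) ^ (n + 1) =
      b * (c - b ^ 2) ^ (n + 1) - a * (c - a ^ 2) ^ (n + 1) +
        2 * (n + 1) * c * ∫ t in a..b, (c - t ^ 2) ^ n := by
  have integrable (k : ℝ) (m : ℕ) :
      IntervalIntegrable (fun t => k * (c - t ^ 2) ^ m) MeasureTheory.volume a b :=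
    Continuous.intervalIntegrable (by fun_prop) a b
  have integral_deriv := intervalIntegral.integral_eq_sub_of_hasDerivAt
    (fun t _ => hasDerivAt_mul_sub_sq_pow_succ c t n) ((integrable _ _).sub (integrable _ _))
  rw [intervalIntegral.integral_sub (integrable _ _) (integrable _ _),
    intervalIntegral.integral_const_mul, intervalIntegral.integral_const_mul] at integral_deriv
  linear_combination integral_deriv

theorem sum_centralBinomProb_mul_one_sub_sq_pow (a b : ℝ) (n : ℕ) :
    ∑ i ∈ range (n + 1), centralBinomProb ℝ i * (b * (1 - b ^ 2) ^ i - a * (1 - a ^ 2) ^ i) =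
      (2 * n + 1) * centralBinomProb ℝ n * ∫ t in a..b, (1 - t ^ 2) ^ n := by
  induction n with
  | zero => simp [centralBinomProb_zero]
  | succ n ih =>
    rw [sum_range_succ, ih, ← two_mul_succ_mul_centralBinomProb_succ]
    push_cast
    linear_combination -centralBinomProb ℝ (n + 1) * integral_sub_sq_pow_succ a b 1 n

theorem one_div_four_pow_mul_choose (i : ℕ) :
    (1 / 4 ^ i : ℝ) * (2 * i).choose i = centralBinomProb ℝ i := by
  rw [centralBinomProb, Nat.centralBinom_eq_two_mul_choose, one_div_mul_eq_div]

theorem stmt_2 (d : ℕ) (hd : 1 ≤ d) (x : ℝ) :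
    g d x = p d * ∫ t in (0 : ℝ)..x, (1 - t ^ 2) ^ d := by
  have p_eq : p d = (2 * d + 1) * centralBinomProb ℝ d := by
    simp only [p, one_div_four_pow_mul_choose, sum_range_succ_centralBinomProb]
  calc
    g d x = ∑ i ∈ range (d + 1), centralBinomProb ℝ i * (x * (1 - x ^ 2) ^ i) := by
      simp only [g, one_div_four_pow_mul_choose]
    _ = (2 * d + 1) * centralBinomProb ℝ d * ∫ t in (0 : ℝ)..x, (1 - t ^ 2) ^ d := by
      simpa using sum_centralBinomProb_mul_one_sub_sq_pow 0 x d
    _ = p d * ∫ t in (0 : ℝ)..x, (1 - t ^ 2) ^ d := by rw [p_eq]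
end

section
/- For every integer d ≥ 1 and every real m ∈ [0, 1], it holds that 0 ≤ 1 − g_d(m) ≤ (1 − m)^{p_d}, where the exponentiation is the real power with exponent p_d. -/
/-!
The derivative of `g d` is `p d * (1 - x ^ 2) ^ d`, so `g d` increases to `g d 1 = 1`; this gives
the lower bound. For the upper bound, the difference `f x = 1 - g d x - (1 - x) ^ p d` vanishes at
`0` and `1`, and `f' x ≤ 0` means `(1 - x) ^ (p d - 1) ≤ (1 - x ^ 2) ^ d`, that is
`0 ≤ (d + 1 - p d) * log (1 - x) + d * log (1 + x)`. As `p d ≤ d + 1`, the right-hand side is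
concave; it vanishes at `0`, so the condition holds exactly on an initial segment of `[0, 1)`.
Thus `f` first decreases and then increases, and its maximum `0` is attained at the endpoints.
-/

open Set

theorem le_max_of_deriv_nonpos_of_le {f : ℝ → ℝ} {a b x : ℝ} (hf : ContinuousOn f (Icc a b))
    (hf' : DifferentiableOn ℝ f (Ioo a b))
    (hsign : ∀ y z, a < y → y ≤ z → z < b → deriv f z ≤ 0 → deriv f y ≤ 0)
    (hx : x ∈ Icc a b) : f x ≤ max (f a) (f b) := by
  rcases hx.1.eq_or_lt with rfl | hax
  · exact le_max_left _ _
  rcases hx.2.eq_or_lt with rfl | hxb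
  · exact le_max_right _ _
  rcases le_or_gt (deriv f x) 0 with hneg | hpos
  · have anti : AntitoneOn f (Icc a x) := by
      refine antitoneOn_of_deriv_nonpos (convex_Icc a x) (hf.mono (Icc_subset_Icc_right hx.2)) ?_ ?_
      all_goals rw [interior_Icc]
      · exact hf'.mono (Ioo_subset_Ioo_right hx.2)
      · exact fun y hy => hsign y x hy.1 hy.2.le hxb hneg
    exact le_max_of_le_left (anti (left_mem_Icc.2 hx.1) (right_mem_Icc.2 hx.1) hx.1)
  · have mono : MonotoneOn f (Icc x b) := by
      refine monotoneOn_of_deriv_nonneg (convex_Icc x b) (hf.mono (Icc_subset_Icc_left hx.1)) ?_ ?_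
      all_goals rw [interior_Icc]
      · exact hf'.mono (Ioo_subset_Ioo_left hx.1)
      · intro y hy
        by_contra! hlt
        exact hpos.not_ge (hsign x y hax hy.1.le hy.2 hlt.le)
    exact le_max_of_le_right (mono (left_mem_Icc.2 hx.2) (right_mem_Icc.2 hx.2) hx.2)

theorem concaveOn_mul_log_one_sub_add_mul_log_one_add {a b : ℝ} (ha : 0 ≤ a) (hb : 0 ≤ b) :
    ConcaveOn ℝ (Ioo (-1) 1) fun x => a * Real.log (1 - x) + b * Real.log (1 + x) := by
  have hlog : ConcaveOn ℝ (Ioi 0) Real.log := strictConcaveOn_log_Ioi.concaveOn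
  have hsub := hlog.comp_affineMap (AffineMap.const ℝ ℝ 1 - AffineMap.id ℝ ℝ)
  have hadd := hlog.comp_affineMap (AffineMap.const ℝ ℝ 1 + AffineMap.id ℝ ℝ)
  refine ((hsub.subset ?_ (convex_Ioo (-1) 1)).smul ha).add
    ((hadd.subset ?_ (convex_Ioo (-1) 1)).smul hb)
  · intro x hx
    simpa using hx.2
  · intro x hx
    simpa [neg_lt_iff_pos_add'] using hx.1

theorem one_sub_rpow_le_one_sub_sq_pow_iff {x q : ℝ} {n : ℕ} (hx : x ∈ Ioo (-1) 1) :
    (1 - x) ^ q ≤ (1 - x ^ 2) ^ n ↔ 0 ≤ (n - q) * Real.log (1 - x) + n * Real.log (1 + x) := by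
  have hsub : 0 < 1 - x := by linarith [hx.2]
  have hadd : 0 < 1 + x := by linarith [hx.1]
  have factor : 1 - x ^ 2 = (1 - x) * (1 + x) := by ring
  rw [factor, ← Real.log_le_log_iff (by positivity) (by positivity), Real.log_rpow hsub,
    Real.log_pow, Real.log_mul hsub.ne' hadd.ne', ← sub_nonneg]
  ring_nf

theorem one_sub_rpow_le_one_sub_sq_pow_of_le {x y q : ℝ} {n : ℕ} (hq : q ≤ n) (hx : 0 ≤ x)
    (hxy : x ≤ y) (hy : y < 1) (h : (1 - y) ^ q ≤ (1 - y ^ 2) ^ n) :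
    (1 - x) ^ q ≤ (1 - x ^ 2) ^ n := by
  have hx' : x ∈ Ioo (-1 : ℝ) 1 := ⟨by linarith, by linarith⟩
  have hy' : y ∈ Ioo (-1 : ℝ) 1 := ⟨by linarith, hy⟩
  rw [one_sub_rpow_le_one_sub_sq_pow_iff hx']
  rw [one_sub_rpow_le_one_sub_sq_pow_iff hy'] at h
  have hmin := (concaveOn_mul_log_one_sub_add_mul_log_one_add (sub_nonneg.2 hq)
    n.cast_nonneg).min_le_of_mem_Icc (x := 0) (by norm_num) hy' ⟨hx, hxy⟩
  simpa [h] using hmin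

/-- The coefficient of `z ^ i` in the power series of `(1 - z) ^ (-1 / 2)`. It is the `i`-th summand
of `p d` and the `i`-th coefficient of `g d`. -/
noncomputable def invSqrtCoeff (i : ℕ) : ℝ :=
  (1 / 4 ^ i : ℝ) * (Nat.choose (2 * i) i)

theorem invSqrtCoeff_nonneg (i : ℕ) : 0 ≤ invSqrtCoeff i := by
  unfold invSqrtCoeff
  positivity

theorem invSqrtCoeff_le_one (i : ℕ) : invSqrtCoeff i ≤ 1 := by
  have hchoose : (Nat.choose (2 * i) i : ℝ) ≤ 4 ^ i := by
    exact_mod_cast (Nat.choose_le_two_pow (2 * i) i).trans_eq (pow_mul 2 2 i)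
  rw [invSqrtCoeff, one_div_mul_eq_div]
  exact div_le_one_of_le₀ hchoose (by positivity)

theorem two_mul_add_two_mul_invSqrtCoeff_succ (i : ℕ) :
    (2 * i + 2) * invSqrtCoeff (i + 1) = (2 * i + 1) * invSqrtCoeff i := by
  have hchoose : ((i : ℝ) + 1) * Nat.choose (2 * (i + 1)) (i + 1)
      = 2 * (2 * i + 1) * Nat.choose (2 * i) i := by
    exact_mod_cast Nat.succ_mul_centralBinom_succ i
  rw [invSqrtCoeff, invSqrtCoeff, pow_succ]
  field_simp
  linarith

theorem p_succ (d : ℕ) : p (d + 1) = p d + invSqrtCoeff (d + 1) :=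
  Finset.sum_range_succ _ _

theorem p_eq_mul_invSqrtCoeff (d : ℕ) : p d = (2 * d + 1) * invSqrtCoeff d := by
  induction d with
  | zero => simp [p, invSqrtCoeff]
  | succ d ih =>
    rw [p_succ, ih, ← two_mul_add_two_mul_invSqrtCoeff_succ]
    push_cast
    ring

theorem one_le_p (d : ℕ) : 1 ≤ p d := by
  have hle : invSqrtCoeff 0 ≤ p d :=
    Finset.single_le_sum (fun i _ => invSqrtCoeff_nonneg i) (by simp)
  simpa [invSqrtCoeff] using hle

theorem p_le_add_one (d : ℕ) : p d ≤ d + 1 := by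
  have hle : p d ≤ (Finset.range (d + 1)).card • (1 : ℝ) :=
    Finset.sum_le_card_nsmul _ _ _ fun i _ => invSqrtCoeff_le_one i
  simpa using hle

theorem g_succ (d : ℕ) (x : ℝ) :
    g (d + 1) x = g d x + invSqrtCoeff (d + 1) * (x * (1 - x ^ 2) ^ (d + 1)) :=
  Finset.sum_range_succ _ _

theorem g_apply_zero (d : ℕ) : g d 0 = 0 := by
  simp [g]

theorem g_apply_one (d : ℕ) : g d 1 = 1 := by
  induction d with
  | zero => simp [g]
  | succ d ih => simp [g_succ, ih]

theorem hasDerivAt_g (d : ℕ) (x : ℝ) : HasDerivAt (g d) (p d * (1 - x ^ 2) ^ d) x := by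
  induction d with
  | zero =>
    have hg : g 0 = id := funext fun y => by simp [g]
    simpa [hg, p] using hasDerivAt_id x
  | succ d ih =>
    have hsq : HasDerivAt (fun y : ℝ => 1 - y ^ 2) (-(2 * x)) x := by
      simpa using (hasDerivAt_pow 2 x).const_sub 1
    have hsum := ih.add
      (((hasDerivAt_id' x).mul (hsq.pow (d + 1))).const_mul (invSqrtCoeff (d + 1)))
    rw [funext (g_succ d)]
    refine hsum.congr_deriv ?_
    rw [p_succ, p_eq_mul_invSqrtCoeff d, ← two_mul_add_two_mul_invSqrtCoeff_succ]
    push_cast [Pi.pow_apply, Nat.add_sub_cancel]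
    ring

theorem monotoneOn_g (d : ℕ) : MonotoneOn (g d) (Icc (-1) 1) := by
  refine monotoneOn_of_hasDerivWithinAt_nonneg (convex_Icc (-1) 1)
    (fun x _ => (hasDerivAt_g d x).continuousAt.continuousWithinAt)
    (fun x _ => (hasDerivAt_g d x).hasDerivWithinAt) fun x hx => ?_
  have hsq : 0 ≤ 1 - x ^ 2 := by
    nlinarith [(interior_subset hx).1, (interior_subset hx).2]
  exact mul_nonneg (zero_le_one.trans (one_le_p d)) (pow_nonneg hsq d)

theorem hasDerivAt_one_sub_g_sub_rpow (d : ℕ) (x : ℝ) :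
    HasDerivAt (fun y => 1 - g d y - (1 - y) ^ p d)
      (p d * ((1 - x) ^ (p d - 1) - (1 - x ^ 2) ^ d)) x := by
  have hrpow := ((hasDerivAt_id' x).const_sub 1).rpow_const (p := p d) (Or.inr (one_le_p d))
  refine (((hasDerivAt_g d x).const_sub 1).sub hrpow).congr_deriv ?_
  ring

theorem one_sub_g_le_one_sub_rpow (d : ℕ) {x : ℝ} (hx : x ∈ Icc 0 1) :
    1 - g d x ≤ (1 - x) ^ p d := by
  have hp : 0 < p d := zero_lt_one.trans_le (one_le_p d)
  have hderiv := hasDerivAt_one_sub_g_sub_rpow d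
  have hmax := le_max_of_deriv_nonpos_of_le (a := 0) (b := 1)
    (fun y _ => (hderiv y).continuousAt.continuousWithinAt)
    (fun y _ => (hderiv y).differentiableAt.differentiableWithinAt) ?_ hx
  · simpa [g_apply_zero, g_apply_one, Real.zero_rpow hp.ne'] using hmax
  · intro y z hy hyz hz
    simp only [(hderiv _).deriv, ← le_div_iff₀' hp, zero_div, sub_nonpos]
    exact one_sub_rpow_le_one_sub_sq_pow_of_le (sub_le_iff_le_add.2 (p_le_add_one d)) hy.le hyz hz

theorem stmt_3 (d : ℕ) (hd : 1 ≤ d) (m : ℝ) (hm : m ∈ Set.Icc (0 : ℝ) 1) :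
    0 ≤ 1 - g d m ∧ 1 - g d m ≤ (1 - m) ^ (p d) := by
  refine ⟨sub_nonneg.2 ?_, one_sub_g_le_one_sub_rpow d hm⟩
  calc g d m ≤ g d 1 :=
        monotoneOn_g d ⟨by linarith [hm.1], hm.2⟩ ⟨by norm_num, le_rfl⟩ hm.2
    _ = 1 := g_apply_one d
end

section
/- Let d ≥ 1 be an integer, δ ∈ (0, 1], and σ ≥ 1 a real number. Suppose k₁, k₂ are natural numbers such that (p_d)^{k₁} ≥ 2/δ and (d+1)^{k₂} ≥ σ − 1. Then for every real m with δ ≤ |m| ≤ 1, |g_d^{(k₁+k₂)}(m) − sgn(m)| ≤ 2^{−σ}; that is, g_d^{(k₁+k₂)} is (σ, δ)-close to the sign function on [−1, 1]. -/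
noncomputable def sgn (m : ℝ) : ℝ :=
  if m > 0 then 1 else if m = 0 then 0 else -1

/-!
Let `q` be the Taylor polynomial of degree `d` of `(1 - x) ^ (-1 / 2)` at `0`, so that
`g d m = m * q (1 - m ^ 2)` and `p d = q 1`. The coefficients of `q` are nonnegative and the
square of the full series is `1 / (1 - x)`, hence `1 - x ^ (d + 1) ≤ (1 - x) * q x ^ 2 ≤ 1` on
`[0, 1]`. At `x = 1 - m ^ 2` this says that `g d` maps `[-1, 1]` to itself and raises the defect
`1 - m ^ 2` to at least the power `d + 1`. Since also `q x ≥ p d * x ^ d`, one application of `g d`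
multiplies the ratio of `|m|` to the defect by at least `p d`. So the first `k₁` steps bring this
ratio from `δ` up to `2`, after which the next `k₂` steps shrink the defect doubly exponentially.
-/

open Finset

section DoubleSums

variable {α : Type*} [AddCommMonoid α] [PartialOrder α] [IsOrderedAddMonoid α] {f : ℕ → ℕ → α}

theorem sum_range_sum_antidiagonal_le_sum_range_sum_range (hf : ∀ i j, 0 ≤ f i j) (N : ℕ) :
    ∑ n ∈ range N, ∑ x ∈ antidiagonal n, f x.1 x.2 ≤ ∑ i ∈ range N, ∑ j ∈ range N, f i j := by
  simp only [Nat.sum_antidiagonal_eq_sum_range_succ f, sum_range_diag_flip]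
  exact sum_le_sum fun i _ ↦
    sum_le_sum_of_subset_of_nonneg (range_mono (N.sub_le i)) fun j _ _ ↦ hf i j

theorem sum_range_sum_range_le_sum_range_add_sum_antidiagonal (hf : ∀ i j, 0 ≤ f i j) (M N : ℕ) :
    ∑ i ∈ range M, ∑ j ∈ range N, f i j ≤
      ∑ n ∈ range (M + N), ∑ x ∈ antidiagonal n, f x.1 x.2 := by
  simp only [Nat.sum_antidiagonal_eq_sum_range_succ f, sum_range_diag_flip]
  calc ∑ i ∈ range M, ∑ j ∈ range N, f i j
      ≤ ∑ i ∈ range M, ∑ j ∈ range (M + N - i), f i j :=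
        sum_le_sum fun i hi ↦ sum_le_sum_of_subset_of_nonneg
          (range_mono (by have := mem_range.1 hi; omega)) fun j _ _ ↦ hf i j
    _ ≤ ∑ i ∈ range (M + N), ∑ j ∈ range (M + N - i), f i j :=
        sum_le_sum_of_subset_of_nonneg (range_mono (M.le_add_right N)) fun i _ _ ↦
          sum_nonneg fun j _ ↦ hf i j

end DoubleSums

section CentralBinom

variable {K : Type*} [Field K] [CharZero K]

theorem succ_mul_ringChoose_succ (r : K) (n : ℕ) :
    (n + 1) * Ring.choose r (n + 1) = (r - n) * Ring.choose r n := by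
  have h := Ring.choose_smul_choose r n.le_succ
  rw [Nat.choose_succ_self_right, Nat.succ_eq_add_one, Nat.add_sub_cancel_left,
    Ring.choose_one_right, nsmul_eq_mul] at h
  rw [mul_comm (r - n), ← h, Nat.cast_succ]

theorem ringChoose_neg_half (n : ℕ) :
    Ring.choose (-1 / 2 : K) n = (-1) ^ n * (n.centralBinom / 4 ^ n) := by
  induction n with
  | zero => simp
  | succ n ih =>
    have hn : (n + 1 : K) ≠ 0 := n.cast_add_one_ne_zero
    have hbinom : (n + 1 : K) * (n + 1).centralBinom = 2 * (2 * n + 1) * n.centralBinom :=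
      mod_cast n.succ_mul_centralBinom_succ
    refine mul_left_cancel₀ hn ?_
    rw [succ_mul_ringChoose_succ, ih]
    calc (-1 / 2 - n : K) * ((-1) ^ n * (n.centralBinom / 4 ^ n))
        = (-1) ^ (n + 1) * (2 * (2 * n + 1) * n.centralBinom / 4 ^ (n + 1)) := by
          field_simp; ring
      _ = (n + 1) * ((-1) ^ (n + 1) * ((n + 1).centralBinom / 4 ^ (n + 1))) := by
          rw [← hbinom]; ring

theorem ringChoose_neg_one (n : ℕ) : Ring.choose (-1 : K) n = (-1) ^ n := by
  rw [Ring.choose_neg', Ring.multichoose_one, Units.smul_def, Int.coe_negOnePow_natCast]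
  simp

theorem sum_antidiagonal_centralBinom_div_four_pow_mul (n : ℕ) :
    ∑ x ∈ antidiagonal n, (x.1.centralBinom / 4 ^ x.1 : K) * (x.2.centralBinom / 4 ^ x.2) = 1 := by
  have vandermonde := Ring.add_choose_eq n (Commute.all (-1 / 2 : K) (-1 / 2))
  rw [show (-1 / 2 + -1 / 2 : K) = -1 by norm_num, ringChoose_neg_one] at vandermonde
  refine mul_left_cancel₀ (pow_ne_zero n (neg_ne_zero.2 one_ne_zero) : (-1 : K) ^ n ≠ 0) ?_
  calc (-1) ^ n * ∑ x ∈ antidiagonal n,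
          (x.1.centralBinom / 4 ^ x.1 : K) * (x.2.centralBinom / 4 ^ x.2)
      = ∑ x ∈ antidiagonal n, Ring.choose (-1 / 2 : K) x.1 * Ring.choose (-1 / 2 : K) x.2 := by
        rw [mul_sum]
        refine sum_congr rfl fun x hx ↦ ?_
        rw [ringChoose_neg_half, ringChoose_neg_half, ← mem_antidiagonal.1 hx, pow_add]
        ring
    _ = (-1) ^ n * 1 := by rw [← vandermonde, mul_one]

theorem geom_sum_eq_sum_antidiagonal_centralBinom (x : K) (N : ℕ) :
    ∑ n ∈ range N, x ^ n = ∑ n ∈ range N, ∑ y ∈ antidiagonal n,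
      (y.1.centralBinom / 4 ^ y.1 * x ^ y.1) * (y.2.centralBinom / 4 ^ y.2 * x ^ y.2) := by
  refine sum_congr rfl fun n _ ↦ ?_
  rw [← one_mul (x ^ n), ← sum_antidiagonal_centralBinom_div_four_pow_mul n, sum_mul]
  refine sum_congr rfl fun y hy ↦ ?_
  rw [← mem_antidiagonal.1 hy, pow_add]
  ring

end CentralBinom

/-- The Taylor polynomial of degree `d` of `(1 - x) ^ (-1 / 2)` at `0`, as a function of `x`. -/
def invSqrtTaylor {K : Type*} [Field K] (d : ℕ) (x : K) : K :=
  ∑ i ∈ range (d + 1), i.centralBinom / 4 ^ i * x ^ i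

section InvSqrtTaylor

variable {K : Type*} [Field K] [LinearOrder K] [IsStrictOrderedRing K] {x : K}

theorem invSqrtTaylor_pos (d : ℕ) (hx : 0 ≤ x) : 0 < invSqrtTaylor d x :=
  sum_pos' (fun i _ ↦ by positivity) ⟨0, by simp⟩

theorem invSqrtTaylor_one_mul_pow_le (d : ℕ) (hx₀ : 0 ≤ x) (hx₁ : x ≤ 1) :
    invSqrtTaylor d 1 * x ^ d ≤ invSqrtTaylor d x := by
  simp only [invSqrtTaylor, one_pow, mul_one, sum_mul]
  refine sum_le_sum fun i hi ↦ mul_le_mul_of_nonneg_left ?_ (by positivity)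
  exact pow_le_pow_of_le_one hx₀ hx₁ (mem_range_succ_iff.1 hi)

theorem geom_sum_le_invSqrtTaylor_sq (d : ℕ) (hx : 0 ≤ x) :
    ∑ n ∈ range (d + 1), x ^ n ≤ invSqrtTaylor d x ^ 2 := by
  rw [sq, invSqrtTaylor, sum_mul_sum, geom_sum_eq_sum_antidiagonal_centralBinom]
  exact sum_range_sum_antidiagonal_le_sum_range_sum_range
    (f := fun i j ↦ (i.centralBinom / 4 ^ i * x ^ i) * (j.centralBinom / 4 ^ j * x ^ j))
    (fun i j ↦ by positivity) (d + 1)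

theorem invSqrtTaylor_sq_le_geom_sum (d : ℕ) (hx : 0 ≤ x) :
    invSqrtTaylor d x ^ 2 ≤ ∑ n ∈ range (d + 1 + (d + 1)), x ^ n := by
  rw [sq, invSqrtTaylor, sum_mul_sum, geom_sum_eq_sum_antidiagonal_centralBinom]
  exact sum_range_sum_range_le_sum_range_add_sum_antidiagonal (fun i j ↦ by positivity) _ _

theorem one_sub_pow_le_one_sub_mul_invSqrtTaylor_sq (d : ℕ) (hx₀ : 0 ≤ x) (hx₁ : x ≤ 1) :
    1 - x ^ (d + 1) ≤ (1 - x) * invSqrtTaylor d x ^ 2 := by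
  rw [← mul_neg_geom_sum]
  exact mul_le_mul_of_nonneg_left (geom_sum_le_invSqrtTaylor_sq d hx₀) (sub_nonneg.2 hx₁)

theorem one_sub_mul_invSqrtTaylor_sq_le_one (d : ℕ) (hx₀ : 0 ≤ x) (hx₁ : x ≤ 1) :
    (1 - x) * invSqrtTaylor d x ^ 2 ≤ 1 :=
  calc (1 - x) * invSqrtTaylor d x ^ 2
      ≤ (1 - x) * ∑ n ∈ range (d + 1 + (d + 1)), x ^ n :=
        mul_le_mul_of_nonneg_left (invSqrtTaylor_sq_le_geom_sum d hx₀) (sub_nonneg.2 hx₁)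
    _ = 1 - x ^ (d + 1 + (d + 1)) := mul_neg_geom_sum x _
    _ ≤ 1 := sub_le_self 1 (by positivity)

end InvSqrtTaylor

section Sgn

variable {m : ℝ}

theorem sgn_eq_sign (m : ℝ) : sgn m = SignType.sign m := by
  rcases lt_trichotomy m 0 with hm | rfl | hm
  · simp [sgn, hm, hm.ne, hm.not_gt]
  · simp [sgn]
  · simp [sgn, hm]

theorem sgn_eq_zero_iff : sgn m = 0 ↔ m = 0 := by
  grind [sgn]

theorem abs_sub_sgn (hm₀ : m ≠ 0) (hm₁ : |m| ≤ 1) : |m - sgn m| = 1 - |m| := by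
  rw [sgn_eq_sign]
  obtain ⟨hneg, hpos⟩ := abs_le.1 hm₁
  rcases hm₀.lt_or_gt with hm | hm
  · rw [sign_neg hm, SignType.coe_neg_one, sub_neg_eq_add, abs_of_neg hm,
      abs_of_nonneg (by linarith)]
    ring
  · rw [sign_pos hm, SignType.coe_one, abs_of_pos hm, abs_of_nonpos (by linarith), neg_sub]

end Sgn

section Defect

theorem one_sub_sq_nonneg {m : ℝ} (hm : |m| ≤ 1) : 0 ≤ 1 - m ^ 2 :=
  sub_nonneg.2 ((sq_le_one_iff_abs_le_one m).2 hm)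

-- Divide `1 - y ^ 2 ≤ |x| * (1 / 2) ^ N` by `1 + |y|`, which is at least `1 + |x| ≥ 2 * |x|`.
theorem one_sub_abs_le_half_pow {x y : ℝ} {N : ℕ} (hN : N ≠ 0) (hx : |x| ≤ 1) (hy : |y| ≤ 1)
    (hx' : 2 * (1 - x ^ 2) ≤ |x|) (hxy : 1 - y ^ 2 ≤ (1 - x ^ 2) ^ N) :
    1 - |y| ≤ (1 / 2) ^ (N + 1) := by
  have he := one_sub_sq_nonneg hx
  have hyx : |x| ≤ |y| := by
    have := hxy.trans (pow_le_of_le_one he (sub_le_self 1 (sq_nonneg x)) hN)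
    exact sq_le_sq.1 (by linarith)
  have hdefect : 1 - y ^ 2 ≤ |x| * (1 / 2) ^ N :=
    calc 1 - y ^ 2 ≤ (1 - x ^ 2) ^ N := hxy
      _ ≤ (|x| * (1 / 2)) ^ N := by gcongr; linarith
      _ = |x| ^ N * (1 / 2) ^ N := mul_pow _ _ _
      _ ≤ |x| * (1 / 2) ^ N := by gcongr; exact pow_le_of_le_one (abs_nonneg x) hx hN
  refine le_of_mul_le_mul_right ?_ (by positivity : 0 < 1 + |x|)
  calc (1 - |y|) * (1 + |x|) ≤ (1 - |y|) * (1 + |y|) := by gcongr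
    _ = 1 - y ^ 2 := by rw [← sq_abs y]; ring
    _ ≤ |x| * (1 / 2) ^ N := hdefect
    _ ≤ (1 + |x|) / 2 * (1 / 2) ^ N := by gcongr; linarith
    _ = (1 / 2) ^ (N + 1) * (1 + |x|) := by ring

end Defect

section Step

variable {m : ℝ}

theorem g_eq_mul_invSqrtTaylor (d : ℕ) (m : ℝ) : g d m = m * invSqrtTaylor d (1 - m ^ 2) := by
  simp only [g, invSqrtTaylor, Nat.centralBinom_eq_two_mul_choose, mul_sum]
  exact sum_congr rfl fun i _ ↦ by ring

theorem p_eq_invSqrtTaylor_one (d : ℕ) : p d = invSqrtTaylor d 1 := by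
  simp only [p, invSqrtTaylor, Nat.centralBinom_eq_two_mul_choose]
  exact sum_congr rfl fun i _ ↦ by ring

theorem p_pos (d : ℕ) : 0 < p d :=
  p_eq_invSqrtTaylor_one d ▸ invSqrtTaylor_pos d zero_le_one

theorem g_sq_eq (d : ℕ) (m : ℝ) :
    g d m ^ 2 = (1 - (1 - m ^ 2)) * invSqrtTaylor d (1 - m ^ 2) ^ 2 := by
  rw [g_eq_mul_invSqrtTaylor, mul_pow, sub_sub_cancel]

theorem abs_g_le_one (d : ℕ) (hm : |m| ≤ 1) : |g d m| ≤ 1 := by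
  rw [← sq_le_one_iff_abs_le_one, g_sq_eq]
  exact one_sub_mul_invSqrtTaylor_sq_le_one d (one_sub_sq_nonneg hm)
    (sub_le_self 1 (sq_nonneg m))

theorem one_sub_g_sq_le (d : ℕ) (hm : |m| ≤ 1) : 1 - g d m ^ 2 ≤ (1 - m ^ 2) ^ (d + 1) := by
  rw [g_sq_eq, sub_le_comm]
  exact one_sub_pow_le_one_sub_mul_invSqrtTaylor_sq d (one_sub_sq_nonneg hm)
    (sub_le_self 1 (sq_nonneg m))

theorem mul_one_sub_sq_pow_le_abs_g (d : ℕ) (hm : |m| ≤ 1) :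
    p d * (1 - m ^ 2) ^ d * |m| ≤ |g d m| := by
  have he := one_sub_sq_nonneg hm
  rw [g_eq_mul_invSqrtTaylor, abs_mul, abs_of_pos (invSqrtTaylor_pos d he), mul_comm |m|,
    p_eq_invSqrtTaylor_one]
  gcongr
  exact invSqrtTaylor_one_mul_pow_le d he (sub_le_self 1 (sq_nonneg m))

theorem p_mul_mul_one_sub_g_sq_le_abs_g (d : ℕ) {c : ℝ} (hc : 0 ≤ c) (hm : |m| ≤ 1)
    (hcm : c * (1 - m ^ 2) ≤ |m|) : p d * c * (1 - g d m ^ 2) ≤ |g d m| := by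
  have hp := (p_pos d).le
  have he := one_sub_sq_nonneg hm
  calc p d * c * (1 - g d m ^ 2)
      ≤ p d * c * (1 - m ^ 2) ^ (d + 1) := by gcongr; exact one_sub_g_sq_le d hm
    _ = p d * (1 - m ^ 2) ^ d * (c * (1 - m ^ 2)) := by ring
    _ ≤ p d * (1 - m ^ 2) ^ d * |m| := by gcongr
    _ ≤ |g d m| := mul_one_sub_sq_pow_le_abs_g d hm

theorem sgn_g (d : ℕ) (hm : |m| ≤ 1) : sgn (g d m) = sgn m := by
  simp only [sgn_eq_sign, g_eq_mul_invSqrtTaylor, sign_mul,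
    sign_pos (invSqrtTaylor_pos d (one_sub_sq_nonneg hm)), mul_one]

end Step

section Iteration

variable {m : ℝ}

theorem abs_g_iterate_le_one (d k : ℕ) (hm : |m| ≤ 1) : |(g d)^[k] m| ≤ 1 :=
  Set.MapsTo.iterate (s := {x : ℝ | |x| ≤ 1}) (fun _ ↦ abs_g_le_one d) k hm

theorem sgn_g_iterate (d k : ℕ) (hm : |m| ≤ 1) : sgn ((g d)^[k] m) = sgn m := by
  induction k with
  | zero => rfl
  | succ k ih => rw [Function.iterate_succ_apply', sgn_g d (abs_g_iterate_le_one d k hm), ih]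

theorem abs_g_iterate_sub_sgn (d k : ℕ) (hm₀ : m ≠ 0) (hm₁ : |m| ≤ 1) :
    |(g d)^[k] m - sgn m| = 1 - |(g d)^[k] m| := by
  have hsgn := sgn_g_iterate d k hm₁
  have hne : (g d)^[k] m ≠ 0 := by rwa [Ne, ← sgn_eq_zero_iff, hsgn, sgn_eq_zero_iff]
  rw [← hsgn, abs_sub_sgn hne (abs_g_iterate_le_one d k hm₁)]

theorem one_sub_g_iterate_sq_le (d k : ℕ) (hm : |m| ≤ 1) :
    1 - (g d)^[k] m ^ 2 ≤ (1 - m ^ 2) ^ (d + 1) ^ k := by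
  induction k with
  | zero => simp
  | succ k ih =>
    have hk := abs_g_iterate_le_one d k hm
    rw [Function.iterate_succ_apply', pow_succ (d + 1), pow_mul]
    exact (one_sub_g_sq_le d hk).trans (pow_le_pow_left₀ (one_sub_sq_nonneg hk) ih _)

theorem p_pow_mul_mul_one_sub_g_iterate_sq_le (d k : ℕ) {c : ℝ} (hc : 0 ≤ c) (hm : |m| ≤ 1)
    (hcm : c * (1 - m ^ 2) ≤ |m|) : p d ^ k * c * (1 - (g d)^[k] m ^ 2) ≤ |(g d)^[k] m| := by
  induction k with
  | zero => simpa using hcm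
  | succ k ih =>
    have hp := p_pos d
    rw [Function.iterate_succ_apply', pow_succ', mul_assoc (p d)]
    exact p_mul_mul_one_sub_g_sq_le_abs_g d (by positivity) (abs_g_iterate_le_one d k hm) ih

theorem one_sub_abs_g_iterate_add_le (d k₁ k₂ : ℕ) {δ : ℝ} (hδ : 0 < δ) (hk₁ : 2 / δ ≤ p d ^ k₁)
    (hm : δ ≤ |m|) (hm₁ : |m| ≤ 1) :
    1 - |(g d)^[k₁ + k₂] m| ≤ (1 / 2) ^ ((d + 1) ^ k₂ + 1) := by
  have hx := abs_g_iterate_le_one d k₁ hm₁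
  have hstart : δ * (1 - m ^ 2) ≤ |m| :=
    (mul_le_of_le_one_right hδ.le (sub_le_self 1 (sq_nonneg m))).trans hm
  have hratio : 2 * (1 - (g d)^[k₁] m ^ 2) ≤ |(g d)^[k₁] m| :=
    (mul_le_mul_of_nonneg_right ((div_le_iff₀ hδ).1 hk₁) (one_sub_sq_nonneg hx)).trans
      (p_pow_mul_mul_one_sub_g_iterate_sq_le d k₁ hδ.le hm₁ hstart)
  rw [add_comm, Function.iterate_add_apply]
  exact one_sub_abs_le_half_pow (by positivity) hx (abs_g_iterate_le_one d k₂ hx) hratio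
    (one_sub_g_iterate_sq_le d k₂ hx)

end Iteration

theorem stmt_9 (d : ℕ) (hd : 1 ≤ d) (δ σ : ℝ) (hδ0 : 0 < δ) (hδ1 : δ ≤ 1)
    (hσ : 1 ≤ σ) (k₁ k₂ : ℕ)
    (h1 : 2 / δ ≤ p d ^ k₁)
    (h2 : σ - 1 ≤ ((d : ℝ) + 1) ^ k₂)
    (m : ℝ) (hm : δ ≤ |m|) (hm1 : |m| ≤ 1) :
    |(g d)^[k₁ + k₂] m - sgn m| ≤ (2 : ℝ) ^ (-σ) := by
  have hm0 : m ≠ 0 := abs_pos.1 (hδ0.trans_le hm)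
  have hσN : -(((d + 1) ^ k₂ + 1 : ℕ) : ℝ) ≤ -σ := by push_cast; linarith
  calc |(g d)^[k₁ + k₂] m - sgn m|
      = 1 - |(g d)^[k₁ + k₂] m| := abs_g_iterate_sub_sgn d (k₁ + k₂) hm0 hm1
    _ ≤ (1 / 2) ^ ((d + 1) ^ k₂ + 1) := one_sub_abs_g_iterate_add_le d k₁ k₂ hδ0 h1 hm hm1
    _ = 2 ^ (-(((d + 1) ^ k₂ + 1 : ℕ) : ℝ)) := by
        rw [Real.rpow_neg two_pos.le, Real.rpow_natCast, one_div, inv_pow]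
    _ ≤ 2 ^ (-σ) := Real.rpow_le_rpow_of_exponent_le one_le_two hσN
end

section
/- Let R be a commutative ring, h ≥ 1, and A, B two h×h matrices over R with indices taken modulo h. Then A·B = Σ_{k=0}^{h−1} (φ^k(μ(A))) ⊙ (π^k(ζ(B))), where · is matrix multiplication. -/
/-- `μ(A)_{i,j} = A_{i, i+j}` -/
def matMu {h : ℕ} {R : Type*} (A : Matrix (ZMod h) (ZMod h) R) :
    Matrix (ZMod h) (ZMod h) R :=
  fun i j => A i (i + j)

/-- `ζ(A)_{i,j} = A_{i+j, j}` -/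
def matZeta {h : ℕ} {R : Type*} (A : Matrix (ZMod h) (ZMod h) R) :
    Matrix (ZMod h) (ZMod h) R :=
  fun i j => A (i + j) j

/-- `φ(A)_{i,j} = A_{i, j+1}` -/
def matPhi {h : ℕ} {R : Type*} (A : Matrix (ZMod h) (ZMod h) R) :
    Matrix (ZMod h) (ZMod h) R :=
  fun i j => A i (j + 1)

/-- `π(A)_{i,j} = A_{i+1, j}` -/
def matPi {h : ℕ} {R : Type*} (A : Matrix (ZMod h) (ZMod h) R) :
    Matrix (ZMod h) (ZMod h) R :=
  fun i j => A (i + 1) j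

/-!
The `(i, j)` entry of the `k`-th summand is `A i m * B m j` with `m = i + j + k`. For fixed `i` and
`j`, as `k` runs over `0, …, h - 1` the index `m` runs once through all residues, so the entries sum
to those of the matrix product.
-/

theorem sum_range_natCast_zmod {M : Type*} [AddCommMonoid M] (h : ℕ) [NeZero h] (f : ZMod h → M) :
    ∑ k ∈ Finset.range h, f k = ∑ x, f x :=
  Finset.sum_bij' (fun k _ => (k : ZMod h)) (fun x _ => x.val)
    (fun _ _ => Finset.mem_univ _)
    (fun x _ => Finset.mem_range.2 x.val_lt)
    (fun _ hk => ZMod.val_cast_of_lt (Finset.mem_range.1 hk))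
    (fun x _ => ZMod.natCast_zmod_val x)
    (fun _ _ => rfl)

theorem sum_range_add_natCast_zmod {M : Type*} [AddCommMonoid M] (h : ℕ) [NeZero h]
    (f : ZMod h → M) (a : ZMod h) :
    ∑ k ∈ Finset.range h, f (a + k) = ∑ x, f x :=
  (sum_range_natCast_zmod h fun x => f (a + x)).trans (Equiv.sum_comp (Equiv.addLeft a) f)

section Iterate

variable {h : ℕ} {R : Type*}

theorem matPhi_iterate_apply (k : ℕ) (A : Matrix (ZMod h) (ZMod h) R) (i j : ZMod h) :
    matPhi^[k] A i j = A i (j + k) := by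
  induction k generalizing j with
  | zero => rw [Function.iterate_zero_apply, Nat.cast_zero, add_zero]
  | succ k ih =>
    calc matPhi^[k + 1] A i j
      _ = matPhi^[k] A i (j + 1) := by rw [Function.iterate_succ_apply', matPhi]
      _ = A i (j + (k + 1 : ℕ)) := by rw [ih, Nat.cast_succ, add_assoc, add_comm (1 : ZMod h)]

theorem matPi_iterate_apply (k : ℕ) (A : Matrix (ZMod h) (ZMod h) R) (i j : ZMod h) :
    matPi^[k] A i j = A (i + k) j := by
  induction k generalizing i with
  | zero => rw [Function.iterate_zero_apply, Nat.cast_zero, add_zero]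
  | succ k ih =>
    calc matPi^[k + 1] A i j
      _ = matPi^[k] A (i + 1) j := by rw [Function.iterate_succ_apply', matPi]
      _ = A (i + (k + 1 : ℕ)) j := by rw [ih, Nat.cast_succ, add_assoc, add_comm (1 : ZMod h)]

theorem matPhi_iterate_matMu_apply (k : ℕ) (A : Matrix (ZMod h) (ZMod h) R) (i j : ZMod h) :
    matPhi^[k] (matMu A) i j = A i (i + j + k) := by
  rw [matPhi_iterate_apply, matMu, add_assoc]

theorem matPi_iterate_matZeta_apply (k : ℕ) (A : Matrix (ZMod h) (ZMod h) R) (i j : ZMod h) :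
    matPi^[k] (matZeta A) i j = A (i + j + k) j := by
  rw [matPi_iterate_apply, matZeta, add_right_comm]

end Iterate

theorem stmt_14_general (R : Type*) [NonUnitalNonAssocSemiring R] (h : ℕ) [NeZero h]
    (A B : Matrix (ZMod h) (ZMod h) R) :
    A * B = ∑ k ∈ Finset.range h,
      Matrix.hadamard (matPhi^[k] (matMu A)) (matPi^[k] (matZeta B)) := by
  ext i j
  calc (A * B) i j
    _ = ∑ m, A i m * B m j := Matrix.mul_apply
    _ = ∑ k ∈ Finset.range h, A i (i + j + k) * B (i + j + k) j :=
      (sum_range_add_natCast_zmod h (fun m => A i m * B m j) (i + j)).symm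
    _ = (∑ k ∈ Finset.range h,
          Matrix.hadamard (matPhi^[k] (matMu A)) (matPi^[k] (matZeta B))) i j := by
      simp only [Matrix.sum_apply, Matrix.hadamard_apply, matPhi_iterate_matMu_apply,
        matPi_iterate_matZeta_apply]

theorem stmt_14 (R : Type*) [CommRing R] (h : ℕ) [NeZero h]
    (A B : Matrix (ZMod h) (ZMod h) R) :
    A * B = ∑ k ∈ Finset.range h,
      Matrix.hadamard (matPhi^[k] (matMu A)) (matPi^[k] (matZeta B)) :=
  stmt_14_general R h A B
end

section
/- Let h ≥ 1 and let U^T be the h²×h² matrix over ℤ defined by U^T_{h·i+j, k} = 1 if k = h·j + i and U^T_{h·i+j, k} = 0 otherwise (for 0 ≤ i, j < h and 0 ≤ k < h²), i.e., the matrix representation of the transpose map on h×h matrices under row-major vector encoding. Then for 0 ≤ s < h², the s-th diagonal vector of U^T is nonzero if and only if s ≡ (h−1)·r (mod h²) for some integer r with −h < r < h. -/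
/-!
The entry `(a, b)` of an `h × h` matrix sits at index `h * a + b`, and the transpose moves it to
index `h * b + a`. The two indices differ by `(h - 1) * (b - a)`, which is therefore the diagonal
holding the only `1` of that row, and `b - a` takes all the values strictly between `-h` and `h`.
-/

/-- The `h² × h²` integer matrix representation of the transpose map on `h × h`
matrices under row-major vector encoding: for `0 ≤ i, j < h`, the row `h·i + j`
has a `1` exactly in column `h·j + i` and `0` elsewhere.  (A row `r` decomposes
uniquely as `r = h·(r / h) + (r % h)`, so the nonzero column is
`h·(r % h) + r / h`.) -/
def transposeMat (h : ℕ) : Matrix (ZMod (h ^ 2)) (ZMod (h ^ 2)) ℤ :=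
  fun r k => if k = ((h * (r.val % h) + r.val / h : ℕ) : ZMod (h ^ 2)) then 1 else 0

/-- The position of the `p`-th entry of an `h × h` matrix in its row-major vector encoding,
as a residue modulo `h ^ 2`. -/
def rowMajorIndex {h : ℕ} (p : Fin h × Fin h) : ZMod (h ^ 2) :=
  (h * p.1 + p.2 : ℕ)

theorem val_rowMajorIndex {h : ℕ} (p : Fin h × Fin h) :
    (rowMajorIndex p).val = h * p.1 + p.2 := by
  apply ZMod.val_natCast_of_lt
  calc h * p.1 + p.2 < h * (p.1 + 1) := by rw [mul_add_one]; gcongr; exact p.2.isLt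
    _ ≤ h * h := by gcongr; exact p.1.isLt
    _ = h ^ 2 := (sq h).symm

theorem rowMajorIndex_surjective {h : ℕ} [NeZero h] :
    Function.Surjective (rowMajorIndex (h := h)) := by
  intro i
  have row_lt : i.val / h < h := Nat.div_lt_of_lt_mul (sq h ▸ i.val_lt)
  have col_lt : i.val % h < h := Nat.mod_lt _ (NeZero.pos h)
  refine ⟨(⟨i.val / h, row_lt⟩, ⟨i.val % h, col_lt⟩), ?_⟩
  rw [rowMajorIndex, Nat.div_add_mod, ZMod.natCast_zmod_val]

theorem rowMajorIndex_swap_sub_rowMajorIndex {h : ℕ} (p : Fin h × Fin h) :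
    rowMajorIndex p.swap - rowMajorIndex p = (((h : ℤ) - 1) * ((p.2 : ℤ) - p.1) : ℤ) := by
  simp only [rowMajorIndex, Prod.fst_swap, Prod.snd_swap]
  push_cast
  ring

theorem transposeMat_rowMajorIndex {h : ℕ} (p : Fin h × Fin h) (k : ZMod (h ^ 2)) :
    transposeMat h (rowMajorIndex p) k = if k = rowMajorIndex p.swap then 1 else 0 := by
  have row : (h * p.1 + p.2) / h = (p.1 : ℕ) := by
    rw [Nat.mul_add_div p.1.pos, Nat.div_eq_of_lt p.2.isLt, add_zero]
  have col : (h * p.1 + p.2) % h = (p.2 : ℕ) := by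
    rw [Nat.mul_add_mod, Nat.mod_eq_of_lt p.2.isLt]
  rw [transposeMat, val_rowMajorIndex, row, col]
  rfl

theorem transposeMat_rowMajorIndex_add_ne_zero_iff {h : ℕ} (p : Fin h × Fin h)
    (s : ZMod (h ^ 2)) :
    transposeMat h (rowMajorIndex p) (rowMajorIndex p + s) ≠ 0 ↔
      s = (((h : ℤ) - 1) * ((p.2 : ℤ) - p.1) : ℤ) := by
  rw [transposeMat_rowMajorIndex, ← rowMajorIndex_swap_sub_rowMajorIndex, eq_sub_iff_add_eq',
    ite_ne_right_iff, and_iff_left one_ne_zero]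

theorem exists_fin_sub_eq_iff {h : ℕ} {r : ℤ} :
    (∃ p : Fin h × Fin h, (p.2 : ℤ) - p.1 = r) ↔ -(h : ℤ) < r ∧ r < h := by
  constructor
  · rintro ⟨⟨a, b⟩, rfl⟩
    dsimp only
    omega
  · rintro ⟨neg_lt, lt⟩
    -- One of the two coordinates is `0`, the other `|r|`.
    exact ⟨(⟨(-r).toNat, by lia⟩, ⟨r.toNat, by lia⟩), Int.toNat_sub_toNat_neg r⟩

theorem stmt_18 (h : ℕ) (hh : 1 ≤ h) (s : ZMod (h ^ 2)) :
    (fun i => transposeMat h i (i + s)) ≠ (0 : ZMod (h ^ 2) → ℤ) ↔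
      ∃ r : ℤ, -(h : ℤ) < r ∧ r < (h : ℤ) ∧ s = ((((h : ℤ) - 1) * r : ℤ) : ZMod (h ^ 2)) := by
  have : NeZero h := ⟨Nat.one_le_iff_ne_zero.mp hh⟩
  calc (fun i => transposeMat h i (i + s)) ≠ (0 : ZMod (h ^ 2) → ℤ)
    _ ↔ ∃ p : Fin h × Fin h, transposeMat h (rowMajorIndex p) (rowMajorIndex p + s) ≠ 0 :=
      Function.ne_iff.trans rowMajorIndex_surjective.exists
    _ ↔ ∃ p : Fin h × Fin h, s = (((h : ℤ) - 1) * ((p.2 : ℤ) - p.1) : ℤ) := by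
      simp only [transposeMat_rowMajorIndex_add_ne_zero_iff]
    _ ↔ ∃ r : ℤ, (∃ p : Fin h × Fin h, (p.2 : ℤ) - p.1 = r) ∧ s = (((h : ℤ) - 1) * r : ℤ) := by
      simp only [exists_exists_eq_and]
    _ ↔ ∃ r : ℤ, -(h : ℤ) < r ∧ r < (h : ℤ) ∧ s = ((((h : ℤ) - 1) * r : ℤ) : ZMod (h ^ 2)) := by
      simp only [exists_fin_sub_eq_iff, and_assoc]
end

section
/- The function m ↦ ln(1+m)/ln(1−m) is strictly increasing on the open interval (0, 1). -/
/-!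
For a strictly concave function the secant slopes through a fixed point `c` decrease strictly from
left to right. As `x` grows, the slope to `c + x` therefore decreases and the slope to `c - x`
increases; if the function is also increasing, both are positive, so their quotient decreases. The
quotient of the increments of the function is minus the quotient of these slopes. For `log` at
`c = 1` the increments are `log (1 + x)` and `log (1 - x)`.
-/

section Secant

variable {𝕜 : Type*} [Field 𝕜]

theorem sub_div_sub_eq_neg_slope_div_slope (f : 𝕜 → 𝕜) (c : 𝕜) {x : 𝕜} (hx : x ≠ 0) :
    (f (c + x) - f c) / (f (c - x) - f c) = -(slope f c (c + x) / slope f c (c - x)) := by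
  rw [slope_def_field, slope_def_field, add_sub_cancel_left, sub_sub_cancel_left, div_neg, div_neg,
    neg_neg, div_div_div_cancel_right₀ hx]

variable [LinearOrder 𝕜] [IsStrictOrderedRing 𝕜] {s : Set 𝕜} {f : 𝕜 → 𝕜}

theorem slope_strictAntiOn_of_strictConcaveOn (hf : StrictConcaveOn 𝕜 s f) {c : 𝕜} (hc : c ∈ s) :
    StrictAntiOn (slope f c) (s \ {c}) := by
  rintro x ⟨hx, hxc⟩ y ⟨hy, hyc⟩ hxy
  simpa only [slope_def_field] using hf.secant_strict_mono hc hx hy hxc hyc hxy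

theorem strictMonoOn_sub_div_sub_of_strictConcaveOn (hf : StrictConcaveOn 𝕜 s f)
    (hmono : StrictMonoOn f s) {c : 𝕜} (hc : c ∈ s) :
    StrictMonoOn (fun x ↦ (f (c + x) - f c) / (f (c - x) - f c))
      {x | 0 < x ∧ c + x ∈ s ∧ c - x ∈ s} := by
  rintro a ⟨ha, ha_add, ha_sub⟩ b ⟨hb, hb_add, hb_sub⟩ hab
  have hanti := slope_strictAntiOn_of_strictConcaveOn hf hc
  have right_slope_lt : slope f c (c + b) < slope f c (c + a) :=
    hanti ⟨ha_add, by simp [ha.ne']⟩ ⟨hb_add, by simp [hb.ne']⟩ (by gcongr)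
  have left_slope_lt : slope f c (c - a) < slope f c (c - b) :=
    hanti ⟨hb_sub, by simp [hb.ne']⟩ ⟨ha_sub, by simp [ha.ne']⟩ (by gcongr)
  have right_slope_pos : 0 < slope f c (c + b) :=
    hmono.slope_pos hc hb_add (lt_add_of_pos_right c hb).ne
  have left_slope_pos : 0 < slope f c (c - a) :=
    hmono.slope_pos hc ha_sub (sub_lt_self c ha).ne'
  simp only [sub_div_sub_eq_neg_slope_div_slope f c ha.ne',
    sub_div_sub_eq_neg_slope_div_slope f c hb.ne']
  exact neg_lt_neg (div_lt_div₀ right_slope_lt left_slope_lt.le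
    (right_slope_pos.trans right_slope_lt).le left_slope_pos)

end Secant

theorem stmt_19 :
    StrictMonoOn (fun m : ℝ => Real.log (1 + m) / Real.log (1 - m))
      (Set.Ioo (0 : ℝ) 1) := by
  have increments_mono := strictMonoOn_sub_div_sub_of_strictConcaveOn strictConcaveOn_log_Ioi
    Real.strictMonoOn_log (Set.mem_Ioi.2 one_pos)
  simp only [Real.log_one, sub_zero] at increments_mono
  refine increments_mono.mono ?_
  rintro m ⟨hm_pos, hm_lt⟩
  exact ⟨hm_pos, add_pos one_pos hm_pos, sub_pos.2 hm_lt⟩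
end
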